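/- arXiv:1401.4698 — 2 statements merged into one kernel-verified Lean document; each statement's English description precedes it below -/
import Mathlib

section
/- Fix a real vector space X, an integer T ≥ 1 and f : X^{T+1} → EReal. For 0 ≤ t < T define the operator ♯_t mapping g : X^{t+2} → EReal to g^{♯_t} : X^{t+1} → EReal by g^{♯_t}(x₀,…,x_t) = (g(x₀,…,x_t,·))^♯(x_t), i.e. the concave envelope in the last variable evaluated at the penultimate variable, and let ♯(T) = ♯₀ ∘ ⋯ ∘ ♯_{T−1}. Then for every x₀ ∈ X, f^{♯(T)}(x₀) = sup_{μ ∈ M^T(x₀)} μ[f]. -/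
/-- An `EReal`-valued function on a real vector space is concave
(with the convention `⊤ + ⊥ = ⊥` of `EReal`). -/
def IsEConcave {X : Type*} [AddCommGroup X] [Module ℝ X] (ψ : X → EReal) : Prop :=
  ∀ x y : X, ∀ a b : ℝ, 0 ≤ a → 0 ≤ b → a + b = 1 →
    (a : EReal) * ψ x + (b : EReal) * ψ y ≤ ψ (a • x + b • y)

/-- The concave envelope `g^♯` of `g : X → EReal`: the pointwise infimum of all
concave functions dominating `g`. -/
noncomputable def concaveEnvelope {X : Type*} [AddCommGroup X] [Module ℝ X]
    (g : X → EReal) (x : X) : EReal :=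
  ⨅ ψ : {ψ : X → EReal // IsEConcave ψ ∧ ∀ y, g y ≤ ψ y}, ψ.1 x

/-- A finitely supported probability measure on `X^{T+1}` under which the coordinate
process is a martingale in its natural filtration, starting at `x₀`; an element of
`M^T(x₀)` (the law of a simple martingale `M₀, …, M_T` with `M₀ = x₀`).
The martingale property is expressed by testing the increment `π(t+1) - π(t)`
against all functions `h` of the path depending only on the first `t+1` coordinates. -/
structure MartLaw (X : Type*) [AddCommGroup X] [Module ℝ X] (T : ℕ) (x₀ : X) where
  supp : Finset (Fin (T + 1) → X)
  w : (Fin (T + 1) → X) → ℝ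
  nonneg : ∀ π, 0 ≤ w π
  zero_off : ∀ π ∉ supp, w π = 0
  total : ∑ π ∈ supp, w π = 1
  init : ∀ π ∈ supp, w π ≠ 0 → π 0 = x₀
  mart : ∀ t : Fin T, ∀ h : (Fin (T + 1) → X) → ℝ,
    (∀ π π' : Fin (T + 1) → X, (∀ s : Fin (T + 1), s ≤ t.castSucc → π s = π' s) → h π = h π') →
    ∑ π ∈ supp, (w π * h π) • (π t.succ - π t.castSucc) = 0

/-- The integral `μ[f]` of an `EReal`-valued function on path space under a finitely
supported martingale law, as a finite sum in `EReal`. -/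
noncomputable def MartLaw.exp {X : Type*} [AddCommGroup X] [Module ℝ X] {T : ℕ} {x₀ : X}
    (μ : MartLaw X T x₀) (f : (Fin (T + 1) → X) → EReal) : EReal :=
  ∑ π ∈ μ.supp, (μ.w π : EReal) * f π

/-- The operator `♯_t`, mapping `g : X^{t+2} → EReal` to `g^{♯_t} : X^{t+1} → EReal`,
the concave envelope in the last variable evaluated at the penultimate variable. -/
noncomputable def Sop {X : Type*} [AddCommGroup X] [Module ℝ X] (t : ℕ)
    (g : (Fin (t + 2) → X) → EReal) : (Fin (t + 1) → X) → EReal :=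
  fun x => concaveEnvelope (fun y => g (Fin.snoc x y)) (x (Fin.last t))

/-- The backward composition `♯(s) = ♯₀ ∘ ⋯ ∘ ♯_{s-1}`, mapping a function of `s+1`
variables to a function of one variable. -/
noncomputable def Scomp {X : Type*} [AddCommGroup X] [Module ℝ X] :
    (s : ℕ) → ((Fin (s + 1) → X) → EReal) → ((Fin 1 → X) → EReal)
  | 0, g => g
  | s + 1, g => Scomp s (Sop s g)

theorem ereal_mul_sum {ι : Type*} (s : Finset ι) (a : ℝ) (ha : 0 ≤ a) (F : ι → EReal) :
    (a : EReal) * ∑ i ∈ s, F i = ∑ i ∈ s, (a : EReal) * F i := by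
  classical
  induction s using Finset.induction_on with
  | empty => simp
  | insert i s hi ih =>
    rw [Finset.sum_insert hi, Finset.sum_insert hi, ← ih]
    exact EReal.left_distrib_of_nonneg_of_ne_top (by exact_mod_cast ha) (EReal.coe_ne_top _) _ _

theorem ereal_sum_mul {ι : Type*} (s : Finset ι) (w : ι → ℝ) (hw : ∀ i ∈ s, 0 ≤ w i)
    (c : EReal) :
    ((∑ i ∈ s, w i : ℝ) : EReal) * c = ∑ i ∈ s, (w i : EReal) * c := by
  classical
  induction s using Finset.induction_on with
  | empty => simp
  | insert i s hi ih =>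
    have h1 : 0 ≤ w i := hw i (Finset.mem_insert_self _ _)
    have h2 : ∀ j ∈ s, 0 ≤ w j := fun j hj => hw j (Finset.mem_insert_of_mem hj)
    rw [Finset.sum_insert hi, Finset.sum_insert hi, ← ih h2, EReal.coe_add]
    exact EReal.right_distrib_of_nonneg (by exact_mod_cast h1)
      (by exact_mod_cast Finset.sum_nonneg h2)

theorem ereal_le_mul_of_div {a : ℝ} (ha : 0 < a) {b c : EReal} (h : b / (a : EReal) ≤ c) :
    b ≤ (a : EReal) * c :=
  (EReal.div_le_iff_le_mul (by exact_mod_cast ha) (EReal.coe_ne_top _)).1 h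

theorem ereal_div_lt {a : ℝ} (ha : 0 < a) {b c : EReal} (h : b < (a : EReal) * c) :
    b / (a : EReal) < c :=
  (EReal.div_lt_iff (by exact_mod_cast ha) (EReal.coe_ne_top _)).2 (by rwa [mul_comm])

/-- Jensen's inequality in homogeneous form. -/
theorem jensen_hom {X : Type*} [AddCommGroup X] [Module ℝ X] {ψ : X → EReal}
    (hψ : IsEConcave ψ) {ι : Type*} (s : Finset ι) (w : ι → ℝ) (hw : ∀ i ∈ s, 0 ≤ w i)
    (y : ι → X) :
    ∑ i ∈ s, (w i : EReal) * ψ (y i) ≤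
      ((∑ i ∈ s, w i : ℝ) : EReal) * ψ ((∑ i ∈ s, w i)⁻¹ • ∑ i ∈ s, w i • y i) := by
  classical
  induction s using Finset.induction_on with
  | empty => simp
  | insert i s hi ih =>
    have h1 : 0 ≤ w i := hw i (Finset.mem_insert_self _ _)
    have h2 : ∀ j ∈ s, 0 ≤ w j := fun j hj => hw j (Finset.mem_insert_of_mem hj)
    have ih := ih h2
    rw [Finset.sum_insert hi, Finset.sum_insert hi, Finset.sum_insert hi]
    have hW : 0 ≤ ∑ j ∈ s, w j := Finset.sum_nonneg h2
    have hz : ∑ j ∈ s, w j = 0 → ∑ j ∈ s, w j • y j = 0 := fun h0 =>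
      Finset.sum_eq_zero fun j hj => by
        rw [(Finset.sum_eq_zero_iff_of_nonneg h2).1 h0 j hj, zero_smul]
    generalize ∑ j ∈ s, w j = W at *
    generalize ∑ j ∈ s, w j • y j = m at *
    refine (add_le_add_right ih _).trans ?_
    by_cases hW0 : W = 0
    · subst hW0
      rw [hz rfl]
      by_cases hi0 : w i = 0
      · simp [hi0]
      · simp [smul_smul, inv_mul_cancel₀ hi0]
    have hWp : 0 < W := lt_of_le_of_ne hW (Ne.symm hW0)
    have hpos : 0 < w i + W := by linarith
    have key := hψ (y i) (W⁻¹ • m) (w i / (w i + W)) (W / (w i + W)) (by positivity)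
      (by positivity) (by field_simp)
    have e1 : (w i / (w i + W)) • y i + (W / (w i + W)) • W⁻¹ • m
        = (w i + W)⁻¹ • (w i • y i + m) := by
      rw [smul_add, smul_smul, smul_smul]
      congr 2 <;> field_simp
    rw [e1] at key
    have := mul_le_mul_of_nonneg_left key
      (show (0 : EReal) ≤ ((w i + W : ℝ) : EReal) by exact_mod_cast hpos.le)
    rw [EReal.left_distrib_of_nonneg_of_ne_top (by exact_mod_cast hpos.le) (EReal.coe_ne_top _),
      ← mul_assoc, ← mul_assoc, ← EReal.coe_mul, ← EReal.coe_mul, mul_div_cancel₀ _ hpos.ne',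
      mul_div_cancel₀ _ hpos.ne'] at this
    exact this

theorem sum_le_envelope {X : Type*} [AddCommGroup X] [Module ℝ X] (g : X → EReal)
    {ι : Type*} (s : Finset ι) (w : ι → ℝ) (hw : ∀ i ∈ s, 0 ≤ w i)
    (y : ι → X) (x : X) (hx : ∑ i ∈ s, w i • (y i - x) = 0) :
    ∑ i ∈ s, (w i : EReal) * g (y i) ≤
      ((∑ i ∈ s, w i : ℝ) : EReal) * concaveEnvelope g x := by
  have hW : 0 ≤ ∑ j ∈ s, w j := Finset.sum_nonneg hw
  rcases hW.eq_or_lt with h0 | hpos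
  · have hz := (Finset.sum_eq_zero_iff_of_nonneg hw).1 h0.symm
    rw [← h0, Finset.sum_eq_zero]
    · simp
    · intro i hi
      simp [hz i hi]
  · apply ereal_le_mul_of_div hpos
    refine le_iInf fun ψ => ?_
    rw [EReal.div_le_iff_le_mul (by exact_mod_cast hpos) (EReal.coe_ne_top _)]
    have hm : (∑ i ∈ s, w i)⁻¹ • ∑ i ∈ s, w i • y i = x := by
      simp only [smul_sub, Finset.sum_sub_distrib, ← Finset.sum_smul] at hx
      rw [sub_eq_zero.1 hx, smul_smul, inv_mul_cancel₀ hpos.ne', one_smul]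
    have := jensen_hom ψ.2.1 s w hw y
    rw [hm] at this
    refine le_trans (Finset.sum_le_sum fun i hi => ?_) this
    exact mul_le_mul_of_nonneg_left (ψ.2.2 _) (by exact_mod_cast hw i hi)

/-- Barycentric families with barycentre `x`, and their values. -/
def famVal {X : Type*} [AddCommGroup X] [Module ℝ X] (g : X → EReal) (x : X) : Set EReal :=
  {e | ∃ (n : ℕ) (w : Fin n → ℝ) (y : Fin n → X), (∀ i, 0 ≤ w i) ∧ ∑ i, w i = 1 ∧
    ∑ i, w i • y i = x ∧ e = ∑ i, (w i : EReal) * g (y i)}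

theorem famVal_self {X : Type*} [AddCommGroup X] [Module ℝ X] (g : X → EReal) (x : X) :
    g x ∈ famVal g x :=
  ⟨1, fun _ => 1, fun _ => x, by simp, by simp, by simp, by simp⟩

theorem envelope_le {X : Type*} [AddCommGroup X] [Module ℝ X] (g : X → EReal) (x : X) :
    concaveEnvelope g x ≤ sSup (famVal g x) := by
  refine iInf_le_of_le (⟨fun x => sSup (famVal g x), ?_, fun y => le_sSup (famVal_self g y)⟩ :
    {ψ : X → EReal // IsEConcave ψ ∧ ∀ y, g y ≤ ψ y}) le_rfl
  intro x y a b ha hb hab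
  rcases ha.eq_or_lt with rfl | ha'
  · have : b = 1 := by linarith
    subst this; simp
  rcases hb.eq_or_lt with rfl | hb'
  · have : a = 1 := by linarith
    subst this; simp
  refine EReal.add_le_of_forall_lt fun a' h1 b' h2 => ?_
  obtain ⟨e1, ⟨n, w, p, hw, hs, hm, rfl⟩, h3⟩ := lt_sSup_iff.1 (ereal_div_lt ha' h1)
  obtain ⟨e2, ⟨k, v, q, hv, hs', hm', rfl⟩, h4⟩ := lt_sSup_iff.1 (ereal_div_lt hb' h2)
  refine (add_le_add (ereal_le_mul_of_div ha' h3.le) (ereal_le_mul_of_div hb' h4.le)).trans ?_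
  refine le_sSup ⟨n + k, Fin.append (fun i => a * w i) (fun i => b * v i), Fin.append p q,
    ?_, ?_, ?_, ?_⟩
  · intro i
    refine Fin.addCases (fun i => ?_) (fun i => ?_) i
    · simpa using mul_nonneg ha (hw i)
    · simpa using mul_nonneg hb (hv i)
  · simp [Fin.sum_univ_add, ← Finset.mul_sum, hs, hs', hab]
  · simp [Fin.sum_univ_add, mul_smul, ← Finset.smul_sum, hm, hm']
  · simp [Fin.sum_univ_add, ereal_mul_sum, ha, hb, mul_assoc]

theorem exists_approx {ι : Type*} (s : Finset ι) (w : ι → ℝ) (hw : ∀ i ∈ s, 0 < w i)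
    (F : ι → EReal) (b : EReal) (hb : b < ∑ i ∈ s, (w i : EReal) * F i) :
    ∃ c : ι → EReal, (∀ i ∈ s, c i < F i) ∧ b ≤ ∑ i ∈ s, (w i : EReal) * c i := by
  classical
  induction s using Finset.induction_on generalizing b with
  | empty => exact ⟨fun _ => 0, by simp, by simpa using hb.le⟩
  | insert i s hi ih =>
    have h1 : 0 < w i := hw i (Finset.mem_insert_self _ _)
    have h2 : ∀ j ∈ s, 0 < w j := fun j hj => hw j (Finset.mem_insert_of_mem hj)
    rw [Finset.sum_insert hi] at hb
    have : ∃ a' < (w i : EReal) * F i, ∃ b' < ∑ j ∈ s, (w j : EReal) * F j, b ≤ a' + b' := by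
      by_contra! hcon
      exact absurd hb (not_lt.2 (EReal.add_le_of_forall_lt
        fun a' ha' b' hb' => (hcon a' ha' b' hb').le))
    obtain ⟨a', ha', b', hb', hle⟩ := this
    obtain ⟨c, hc, hbc⟩ := ih h2 b' hb'
    refine ⟨Function.update c i (a' / (w i : EReal)), ?_, ?_⟩
    · intro j hj
      rcases Finset.mem_insert.1 hj with rfl | hj
      · simpa using ereal_div_lt h1 ha'
      · rw [Function.update_of_ne (show j ≠ i from fun h => hi (h ▸ hj))]
        exact hc j hj
    · rw [Finset.sum_insert hi]
      refine hle.trans (add_le_add ?_ (hbc.trans (le_of_eq ?_)))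
      · simpa using ereal_le_mul_of_div h1 le_rfl
      · refine Finset.sum_congr rfl fun j hj => ?_
        rw [Function.update_of_ne (show j ≠ i from fun h => hi (h ▸ hj))]

/-- A martingale law from a weighted finite family of paths. -/
theorem exists_ofFamily {X : Type*} [AddCommGroup X] [Module ℝ X] {T : ℕ} {x₀ : X}
    {ι : Type*} (s : Finset ι) (w : ι → ℝ) (p : ι → Fin (T + 1) → X)
    (hw : ∀ i ∈ s, 0 ≤ w i) (total : ∑ i ∈ s, w i = 1)
    (init : ∀ i ∈ s, w i ≠ 0 → p i 0 = x₀)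
    (mart : ∀ t : Fin T, ∀ h : (Fin (T + 1) → X) → ℝ,
      (∀ π π' : Fin (T + 1) → X, (∀ s : Fin (T + 1), s ≤ t.castSucc → π s = π' s) → h π = h π') →
      ∑ i ∈ s, (w i * h (p i)) • (p i t.succ - p i t.castSucc) = 0) :
    ∃ μ : MartLaw X T x₀, ∀ f, μ.exp f = ∑ i ∈ s, (w i : EReal) * f (p i) := by
  classical
  refine ⟨⟨s.image p, fun π => ∑ i ∈ s with p i = π, w i, ?_, ?_, ?_, ?_, ?_⟩, ?_⟩
  · intro π
    exact Finset.sum_nonneg fun i hi => hw i (Finset.mem_filter.1 hi).1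
  · intro π hπ
    refine Finset.sum_eq_zero fun i hi => ?_
    rw [Finset.mem_filter] at hi
    exact absurd (Finset.mem_image.2 ⟨i, hi⟩) hπ
  · rw [← total]
    exact Finset.sum_fiberwise_of_maps_to (fun i hi => Finset.mem_image_of_mem p hi) _
  · intro π _ hne
    obtain ⟨i, hi, hne⟩ := Finset.exists_ne_zero_of_sum_ne_zero hne
    rw [Finset.mem_filter] at hi
    rw [← hi.2]
    exact init i hi.1 hne
  · intro t h hh
    rw [← mart t h hh, ← Finset.sum_fiberwise_of_maps_to
      (fun i hi => Finset.mem_image_of_mem p hi)]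
    refine Finset.sum_congr rfl fun π _ => ?_
    rw [Finset.sum_mul, Finset.sum_smul]
    refine Finset.sum_congr rfl fun i hi => ?_
    rw [(Finset.mem_filter.1 hi).2]
  · intro f
    change ∑ π ∈ s.image p, ((∑ i ∈ s with p i = π, w i : ℝ) : EReal) * f π = _
    rw [← Finset.sum_fiberwise_of_maps_to
      (fun i hi => Finset.mem_image_of_mem p hi)]
    refine Finset.sum_congr rfl fun π _ => ?_
    rw [ereal_sum_mul _ _ (fun i hi => hw i (Finset.mem_filter.1 hi).1)]
    refine Finset.sum_congr rfl fun i hi => ?_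
    rw [(Finset.mem_filter.1 hi).2]

theorem step_ge {X : Type*} [AddCommGroup X] [Module ℝ X] {T : ℕ} {x₀ : X}
    (f : (Fin (T + 2) → X) → EReal) (ν : MartLaw X (T + 1) x₀) :
    ∃ μ : MartLaw X T x₀, ν.exp f ≤ μ.exp (Sop T f) := by
  classical
  obtain ⟨μ, hμ⟩ := exists_ofFamily (x₀ := x₀) ν.supp ν.w
    (fun π => (Fin.init π : Fin (T + 1) → X))
    (fun i _ => ν.nonneg i) ν.total (fun π hπ h => ν.init π hπ h) (by
      intro t h hh
      have := ν.mart t.castSucc (fun π => h (Fin.init π)) (by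
        intro π π' hπ
        refine hh _ _ fun s hs => ?_
        exact hπ s.castSucc (by simpa [Fin.le_def] using hs))
      exact this)
  refine ⟨μ, ?_⟩
  rw [hμ, MartLaw.exp]
  have hmaps : ∀ π ∈ ν.supp, (Fin.init π : Fin (T + 1) → X) ∈
      ν.supp.image (fun π => (Fin.init π : Fin (T + 1) → X)) :=
    fun i hi => Finset.mem_image_of_mem _ hi
  rw [← Finset.sum_fiberwise_of_maps_to hmaps, ← Finset.sum_fiberwise_of_maps_to hmaps]
  refine Finset.sum_le_sum fun ρ _ => ?_
  have h1 := sum_le_envelope (fun y => f (Fin.snoc ρ y))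
    (ν.supp.filter (fun π => (Fin.init π : Fin (T + 1) → X) = ρ)) ν.w (fun i _ => ν.nonneg i)
    (fun π => π (Fin.last _)) (ρ (Fin.last T)) (by
      have := ν.mart (Fin.last T)
        (fun π => if (Fin.init π : Fin (T + 1) → X) = ρ then 1 else 0) (by
        intro π π' hπ
        have : (Fin.init π : Fin (T + 1) → X) = Fin.init π' := by
          funext s
          exact hπ s.castSucc (by simpa [Fin.le_def] using Fin.is_le s)
        simp only [this])
      rw [← this, Finset.sum_filter]
      refine Finset.sum_congr rfl fun π _ => ?_
      split_ifs with hρ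
      · rw [mul_one, ← hρ]; rfl
      · simp)
  rw [ereal_sum_mul _ _ (fun i _ => ν.nonneg i)] at h1
  refine le_trans (le_of_eq (Finset.sum_congr rfl fun π hπ => ?_))
    (h1.trans (le_of_eq (Finset.sum_congr rfl fun π hπ => ?_)))
  · rw [← (Finset.mem_filter.1 hπ).2, Fin.snoc_init_self]
  · rw [(Finset.mem_filter.1 hπ).2]; rfl

theorem step_le {X : Type*} [AddCommGroup X] [Module ℝ X] {T : ℕ} {x₀ : X}
    (f : (Fin (T + 2) → X) → EReal) (μ : MartLaw X T x₀) (b : EReal)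
    (hb : b < μ.exp (Sop T f)) :
    ∃ ν : MartLaw X (T + 1) x₀, b ≤ ν.exp f := by
  classical
  set S := μ.supp.filter (fun π => μ.w π ≠ 0) with hS
  have hpos : ∀ π ∈ S, 0 < μ.w π := fun π hπ =>
    lt_of_le_of_ne (μ.nonneg π) (Ne.symm (Finset.mem_filter.1 hπ).2)
  have hexp : μ.exp (Sop T f) = ∑ π ∈ S, (μ.w π : EReal) * Sop T f π := by
    rw [MartLaw.exp, hS, Finset.sum_filter_of_ne]
    intro π _ h h0
    simp [h0] at h
  rw [hexp] at hb
  obtain ⟨c, hc, hbc⟩ := exists_approx S μ.w hpos _ b hb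
  have hker : ∀ π : Fin (T + 1) → X, ∃ (n : ℕ) (w : Fin n → ℝ) (y : Fin n → X),
      (∀ i, 0 ≤ w i) ∧ ∑ i, w i = 1 ∧ ∑ i, w i • y i = π (Fin.last T) ∧
      (π ∈ S → c π ≤ ∑ i, (w i : EReal) * f (Fin.snoc π (y i))) := by
    intro π
    by_cases hπ : π ∈ S
    · obtain ⟨e, ⟨n, w, y, h1, h2, h3, rfl⟩, h4⟩ :=
        lt_sSup_iff.1 ((hc π hπ).trans_le (envelope_le _ _))
      exact ⟨n, w, y, h1, h2, h3, fun _ => h4.le⟩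
    · exact ⟨1, fun _ => 1, fun _ => π (Fin.last T), by simp, by simp, by simp,
        fun h => absurd h hπ⟩
  choose n w y hw hs hm hv using hker
  have hSsum : ∀ {M : Type _} [AddCommGroup M] [Module ℝ M] (h : (Fin (T + 1) → X) → ℝ)
      (D : (Fin (T + 1) → X) → M),
      ∑ π ∈ S, (μ.w π * h π) • D π = ∑ π ∈ μ.supp, (μ.w π * h π) • D π := by
    intro M _ _ h D
    rw [hS, Finset.sum_filter_of_ne]
    intro π _ h h0
    simp [h0] at h
  obtain ⟨ν, hν⟩ := exists_ofFamily (x₀ := x₀) (T := T + 1)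
    (S.sigma fun π => (Finset.univ : Finset (Fin (n π))))
    (fun i => μ.w i.1 * w i.1 i.2)
    (fun i => (Fin.snoc i.1 (y i.1 i.2) : Fin (T + 2) → X))
    (fun i _ => mul_nonneg (μ.nonneg _) (hw _ _))
    (by
      rw [Finset.sum_sigma]
      simp only [← Finset.mul_sum, hs, mul_one]
      rw [← μ.total, hS, Finset.sum_filter_ne_zero])
    (by
      intro i hi _
      have hi := (Finset.mem_sigma.1 hi).1
      have := μ.init i.1 (Finset.mem_filter.1 hi).1 (Finset.mem_filter.1 hi).2
      rw [← this]
      exact Fin.snoc_castSucc (α := fun _ => X) (y i.1 i.2) i.1 0)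
    (by
      intro t h hh
      rw [Finset.sum_sigma]
      have hh' : ∀ (π : Fin (T + 1) → X) (z : X),
          h (Fin.snoc π z) = h (Fin.snoc π 0) := by
        intro π z
        refine hh _ _ fun s hs => ?_
        have hlt : s.val < T + 1 := lt_of_le_of_lt hs t.2
        obtain ⟨s', rfl⟩ : ∃ s' : Fin (T + 1), s = s'.castSucc := ⟨⟨s.1, hlt⟩, rfl⟩
        rw [Fin.snoc_castSucc (α := fun _ => X), Fin.snoc_castSucc (α := fun _ => X)]
      simp only [hh']
      refine Fin.lastCases ?_ (fun t hh => ?_) t hh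
      · intro _
        refine Finset.sum_eq_zero fun π _ => ?_
        have e : ∀ j, (Fin.snoc π (y π j) : Fin (T + 2) → X) (Fin.last T).succ = y π j := by
          intro j
          rw [Fin.succ_last]
          exact Fin.snoc_last (α := fun _ => X) _ _
        simp only [e, Fin.snoc_castSucc (α := fun _ => X)]
        have : ∀ j, (μ.w π * w π j * h (Fin.snoc π 0)) • (y π j - π (Fin.last T))
            = (μ.w π * h (Fin.snoc π 0)) • (w π j • y π j - w π j • π (Fin.last T)) := by
          intro j
          rw [← smul_sub, smul_smul]
          congr 1
          ring
        simp only [this, ← Finset.smul_sum, Finset.sum_sub_distrib, ← Finset.sum_smul, hm, hs,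
          one_smul, sub_self, smul_zero]
      · have e : ∀ (π : Fin (T + 1) → X) j,
            (Fin.snoc π (y π j) : Fin (T + 2) → X) t.castSucc.succ = π t.succ := by
          intro π j
          exact Fin.snoc_castSucc (α := fun _ => X) (y π j) π t.succ
        simp only [e, Fin.snoc_castSucc (α := fun _ => X)]
        simp only [← Finset.sum_smul, ← Finset.sum_mul, ← Finset.mul_sum, hs, mul_one]
        rw [hSsum]
        refine μ.mart t (fun π => h (Fin.snoc π 0)) ?_
        intro π π' hπ
        refine hh _ _ fun s hs => ?_
        have hlt : s.val < T + 1 := lt_of_le_of_lt hs t.castSucc.2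
        obtain ⟨s', rfl⟩ : ∃ s' : Fin (T + 1), s = s'.castSucc := ⟨⟨s.1, hlt⟩, rfl⟩
        rw [Fin.snoc_castSucc (α := fun _ => X), Fin.snoc_castSucc (α := fun _ => X)]
        exact hπ s' (by simpa [Fin.le_def] using hs))
  refine ⟨ν, hbc.trans ?_⟩
  rw [hν, Finset.sum_sigma]
  refine Finset.sum_le_sum fun π hπ => ?_
  simp only [EReal.coe_mul, mul_assoc]
  rw [← ereal_mul_sum _ _ (μ.nonneg π)]
  exact mul_le_mul_of_nonneg_left (hv π hπ) (by exact_mod_cast μ.nonneg π)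

theorem Scomp_eq_sup_aux {X : Type*} [AddCommGroup X] [Module ℝ X]
    (T : ℕ) (f : (Fin (T + 1) → X) → EReal) (x₀ : X) :
    Scomp T f (fun _ => x₀) = ⨆ μ : MartLaw X T x₀, μ.exp f := by
  induction T with
  | zero =>
    have hval : ∀ μ : MartLaw X 0 x₀, μ.exp f = f (fun _ => x₀) := by
      intro μ
      have : μ.exp f = ∑ π ∈ μ.supp, (μ.w π : EReal) * f (fun _ => x₀) := by
        refine Finset.sum_congr rfl fun π hπ => ?_
        by_cases h0 : μ.w π = 0
        · simp [h0]
        · have : π = fun _ => x₀ := by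
            funext i
            rw [show i = 0 from Fin.ext (by have := i.2; omega)]
            exact μ.init π hπ h0
          rw [this]
      rw [this, ← ereal_sum_mul _ _ (fun i _ => μ.nonneg i), μ.total]
      simp
    obtain ⟨μ, -⟩ := exists_ofFamily (x₀ := x₀) (T := 0) (Finset.univ : Finset Unit)
      (fun _ => 1) (fun _ _ => x₀) (by simp) (by simp) (by simp) (fun t => t.elim0)
    haveI : Nonempty (MartLaw X 0 x₀) := ⟨μ⟩
    simp only [hval, ciSup_const]
    rfl
  | succ T ih =>
    change Scomp T (Sop T f) (fun _ => x₀) = _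
    rw [ih]
    apply le_antisymm
    · refine iSup_le fun μ => le_of_forall_lt fun b hb => ?_
      obtain ⟨b', hb1, hb2⟩ := exists_between hb
      obtain ⟨ν, hν⟩ := step_le f μ b' hb2
      exact hb1.trans_le (hν.trans (le_iSup (fun ν : MartLaw X (T + 1) x₀ => ν.exp f) ν))
    · refine iSup_le fun ν => ?_
      obtain ⟨μ, hμ⟩ := step_ge f ν
      exact hμ.trans (le_iSup (fun μ : MartLaw X T x₀ => μ.exp (Sop T f)) μ)

/-- For `T ≥ 1` and `f : X^{T+1} → EReal`, the consecutive concave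
envelope satisfies `f^{♯(T)}(x₀) = sup_{μ ∈ M^T(x₀)} μ[f]`. -/
theorem Scomp_eq_sup_martLaw {X : Type*} [AddCommGroup X] [Module ℝ X]
    (T : ℕ) (hT : 1 ≤ T) (f : (Fin (T + 1) → X) → EReal) (x₀ : X) :
    Scomp T f (fun _ => x₀) = ⨆ μ : MartLaw X T x₀, μ.exp f := by
  exact Scomp_eq_sup_aux T f x₀
end

section
/- Let 1 < p < ∞, let X be a nontrivial real normed vector space, Z = {(x,y) ∈ X × ℝ : |x| ≤ y}, φ((x,y), d) = (x + d, max(y, |x + d|)), and for c ≥ 0 let f_c(x,y) = y^p − c|x|^p. If 0 ≤ c < (p/(p−1))^p, then A^∞f_c(x,y) = +∞ for every (x,y) ∈ Z with y > 0; if c ≥ (p/(p−1))^p, then A^∞f_c is real-valued (finite) on all of Z. -/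
/-- The operator `A`: `Ag(z) = (g ∘ φ(z,·))^♯(0)`. -/
noncomputable def Aop {X Z : Type*} [AddCommGroup X] [Module ℝ X]
    (φ : Z → X → Z) (g : Z → EReal) : Z → EReal :=
  fun z => concaveEnvelope (fun d => g (φ z d)) 0

/-- The update map of Doob's inequality: `φ((x,y),d) = (x+d, max(y,|x+d|))` on the
state space `Z = {(x,y) : |x| ≤ y}`. -/
noncomputable def doobPhi (X : Type*) [NormedAddCommGroup X] [NormedSpace ℝ X] :
    {z : X × ℝ // ‖z.1‖ ≤ z.2} → X → {z : X × ℝ // ‖z.1‖ ≤ z.2} :=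
  fun z d => ⟨(z.1.1 + d, max z.1.2 ‖z.1.1 + d‖), le_max_right _ _⟩

theorem aop_mono {X Z : Type*} [AddCommGroup X] [Module ℝ X] (φ : Z → X → Z)
    {g h : Z → EReal} (H : ∀ z, g z ≤ h z) (z : Z) : Aop φ g z ≤ Aop φ h z := by
  unfold Aop concaveEnvelope
  refine le_iInf fun ψ => ?_
  exact iInf_le (fun ψ : {ψ : X → EReal // IsEConcave ψ ∧ ∀ y, g (φ z y) ≤ ψ y} => ψ.1 0)
    ⟨ψ.1, ψ.2.1, fun y => (H _).trans (ψ.2.2 y)⟩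

theorem le_aop {X Z : Type*} [AddCommGroup X] [Module ℝ X] (φ : Z → X → Z)
    (g : Z → EReal) (z : Z) (h0 : φ z 0 = z) : g z ≤ Aop φ g z := by
  unfold Aop concaveEnvelope
  refine le_iInf fun ψ => ?_
  have := ψ.2.2 0
  simpa [h0] using this

theorem le_aop_two {X Z : Type*} [AddCommGroup X] [Module ℝ X] (φ : Z → X → Z)
    (g : Z → EReal) (z : Z) (d₁ d₂ : X) (a b r₁ r₂ : ℝ) (ha : 0 ≤ a) (hb : 0 ≤ b)
    (hab : a + b = 1) (hd : a • d₁ + b • d₂ = 0) (h₁ : (r₁ : EReal) ≤ g (φ z d₁))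
    (h₂ : (r₂ : EReal) ≤ g (φ z d₂)) : ((a * r₁ + b * r₂ : ℝ) : EReal) ≤ Aop φ g z := by
  unfold Aop concaveEnvelope
  refine le_iInf fun ψ => ?_
  have h := ψ.2.1 d₁ d₂ a b ha hb hab
  rw [hd] at h
  refine le_trans ?_ h
  push_cast
  have ha' : (0 : EReal) ≤ (a : EReal) := by exact_mod_cast ha
  have hb' : (0 : EReal) ≤ (b : EReal) := by exact_mod_cast hb
  exact add_le_add (mul_le_mul_of_nonneg_left (h₁.trans (ψ.2.2 d₁)) ha')
    (mul_le_mul_of_nonneg_left (h₂.trans (ψ.2.2 d₂)) hb')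

theorem tangent_rpow (p : ℝ) (hp : 1 < p) (a y : ℝ) (ha : 0 ≤ a) (hy : 0 ≤ y) :
    y ^ p + p * y ^ (p - 1) * (a - y) ≤ a ^ p := by
  rcases hy.eq_or_lt with rfl | hy
  · rw [Real.zero_rpow (by linarith), Real.zero_rpow (by linarith)]
    simpa using Real.rpow_nonneg ha p
  have h := one_add_mul_self_le_rpow_one_add (s := a / y - 1)
    (by have := div_nonneg ha hy.le; linarith) hp.le
  have e : (1 + (a / y - 1)) = a / y := by ring
  rw [e, Real.div_rpow ha hy.le, le_div_iff₀ (Real.rpow_pos_of_pos hy p)] at h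
  have e2 : y ^ p = y ^ (p - 1) * y := by
    rw [← Real.rpow_add_one hy.ne']; congr 1; ring
  refine le_trans (le_of_eq ?_) h
  rw [e2]; field_simp

theorem doobPhi_zero {X : Type*} [NormedAddCommGroup X] [NormedSpace ℝ X]
    (z : {z : X × ℝ // ‖z.1‖ ≤ z.2}) : doobPhi X z 0 = z := by
  apply Subtype.ext
  apply Prod.ext
  · simp [doobPhi]
  · simpa [doobPhi] using z.2

theorem le_iter {X : Type*} [NormedAddCommGroup X] [NormedSpace ℝ X]
    (f : {z : X × ℝ // ‖z.1‖ ≤ z.2} → EReal) (n : ℕ) (z) :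
    f z ≤ (Aop (doobPhi X))^[n] f z := by
  induction n generalizing z with
  | zero => simp
  | succ n ih =>
    rw [Function.iterate_succ_apply']
    exact (ih z).trans (le_aop _ _ _ (doobPhi_zero z))

theorem exists_param (p : ℝ) (hp : 1 < p) (c : ℝ) (hc : c < (p / (p - 1)) ^ p) :
    ∃ ε l : ℝ, 0 < ε ∧ 0 ≤ l ∧ l < 1 ∧ (1 - l) * (1 + ε) ^ p = ε + (1 - l) ∧ c * l ^ p < 1 := by
  have hd : HasDerivAt (fun t : ℝ => t ^ p) p 1 := by
    simpa using Real.hasDerivAt_rpow_const (x := 1) (p := p) (Or.inl one_ne_zero)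
  have h1 := hd.tendsto_slope_zero_right
  have hq : 0 < p / (p - 1) := div_pos (by linarith) (by linarith)
  have h2 := ((tendsto_const_nhds (x := (1:ℝ))).sub (h1.inv₀ (by linarith : p ≠ 0)))
  have hval : (1 - p⁻¹) = (p / (p - 1))⁻¹ := by
    have : p - 1 ≠ 0 := by linarith
    have : p ≠ 0 := by linarith
    field_simp
  rw [hval] at h2
  have h3 := ((h2.rpow_const (p := p) (Or.inl (inv_pos.2 hq).ne')).const_mul c)
  have hlt : c * ((p / (p - 1))⁻¹) ^ p < 1 := by
    rw [Real.inv_rpow hq.le, ← div_eq_mul_inv, div_lt_one (Real.rpow_pos_of_pos hq p)]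
    exact hc
  have h4 := h3.eventually_lt_const hlt
  have h5 := h2.eventually_const_lt (inv_pos.2 hq)
  obtain ⟨ε, ⟨h6, h7⟩, hε⟩ := ((h4.and h5).and self_mem_nhdsWithin).exists
  have hε : 0 < ε := hε
  have hbig : 1 < (1 + ε) ^ p := Real.one_lt_rpow (by linarith) (by linarith)
  refine ⟨ε, _, hε, h7.le, ?_, ?_, h6⟩
  · have : 0 < (ε⁻¹ • ((1 + ε) ^ p - (1:ℝ) ^ p))⁻¹ := by
      rw [Real.one_rpow, smul_eq_mul]
      exact inv_pos.2 (mul_pos (inv_pos.2 hε) (by linarith))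
    linarith
  · rw [Real.one_rpow, smul_eq_mul]
    have : (1 + ε) ^ p - 1 ≠ 0 := by linarith
    field_simp
    ring

theorem diag_bound {X : Type*} [NormedAddCommGroup X] [NormedSpace ℝ X]
    (p : ℝ) (c : ℝ) (hc : 0 ≤ c)
    (f : {z : X × ℝ // ‖z.1‖ ≤ z.2} → EReal)
    (hf : ∀ z, f z = ((z.1.2 ^ p - c * ‖z.1.1‖ ^ p : ℝ) : EReal))
    (ε l : ℝ) (hε : 0 < ε) (hl : 0 ≤ l) (hl1 : l < 1)
    (hk : (1 - l) * (1 + ε) ^ p = ε + (1 - l)) (n : ℕ)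
    (z : {z : X × ℝ // ‖z.1‖ ≤ z.2}) (hz : ‖z.1.1‖ = z.1.2) :
    ((z.1.2 ^ p * (1 - c + n * (ε / (ε + (1 - l)) * (1 - c * l ^ p))) : ℝ) : EReal)
      ≤ (Aop (doobPhi X))^[n] f z := by
  induction n generalizing z with
  | zero =>
    simp only [Function.iterate_zero, id_eq, hf, hz]
    apply le_of_eq; congr 1; push_cast; ring
  | succ n ih =>
    rw [Function.iterate_succ_apply']
    have hs : 0 < ε + (1 - l) := by linarith
    have hy : 0 ≤ z.1.2 := hz ▸ norm_nonneg _
    have n1 : ‖z.1.1 + ε • z.1.1‖ = (1 + ε) * z.1.2 := by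
      rw [show z.1.1 + ε • z.1.1 = (1 + ε) • z.1.1 by rw [add_smul, one_smul], norm_smul, hz,
        Real.norm_of_nonneg (by linarith)]
    have n2 : ‖z.1.1 + (l - 1) • z.1.1‖ = l * z.1.2 := by
      rw [show z.1.1 + (l - 1) • z.1.1 = l • z.1.1 by rw [sub_smul, one_smul]; abel, norm_smul, hz,
        Real.norm_of_nonneg hl]
    have m1 : max z.1.2 ((1 + ε) * z.1.2) = (1 + ε) * z.1.2 := max_eq_right (by nlinarith)
    have m2 : max z.1.2 (l * z.1.2) = z.1.2 := max_eq_left (by nlinarith)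
    have i1 := ih (doobPhi X z (ε • z.1.1)) (by simp only [doobPhi]; rw [n1, m1])
    have i2 := le_iter f n (doobPhi X z ((l - 1) • z.1.1))
    rw [hf] at i2
    have key := le_aop_two (doobPhi X) ((Aop (doobPhi X))^[n] f) z (ε • z.1.1) ((l - 1) • z.1.1)
      ((1 - l) / (ε + (1 - l))) (ε / (ε + (1 - l))) _ _ (div_nonneg (by linarith) hs.le)
      (div_nonneg hε.le hs.le) (by field_simp; ring)
      (by
        rw [smul_smul, smul_smul, ← add_smul]
        convert zero_smul ℝ z.1.1 using 2
        field_simp; ring) i1 i2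
    refine le_trans (le_of_eq ?_) key
    congr 1
    simp only [doobPhi]
    rw [n1, n2, m1, m2, Real.mul_rpow (by linarith) hy, Real.mul_rpow hl hy]
    have hk' : (1 - l) / (ε + (1 - l)) * (1 + ε) ^ p = 1 := by
      rw [div_mul_eq_mul_div, hk, div_self hs.ne']
    push_cast
    linear_combination (-(z.1.2 ^ p * (1 - c + n * (ε / (ε + (1 - l)) * (1 - c * l ^ p))))) * hk'

/-- For `1 < p < ∞` and `f_c(x,y) = y^p - c|x|^p` on `Z = {|x| ≤ y}`:
if `0 ≤ c < (p/(p-1))^p` then `A^∞f_c = +∞` at every state with `y > 0`, whereas if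
`c ≥ (p/(p-1))^p` then `A^∞f_c` is finite (real-valued) on all of `Z`. -/
theorem doob_optimal_constant {X : Type*} [NormedAddCommGroup X] [NormedSpace ℝ X]
    [Nontrivial X] (p : ℝ) (hp : 1 < p) (c : ℝ) (hc : 0 ≤ c)
    (f : {z : X × ℝ // ‖z.1‖ ≤ z.2} → EReal)
    (hf : ∀ z, f z = ((z.1.2 ^ p - c * ‖z.1.1‖ ^ p : ℝ) : EReal)) :
    (c < (p / (p - 1)) ^ p →
      ∀ z : {z : X × ℝ // ‖z.1‖ ≤ z.2}, 0 < z.1.2 →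
        (⨆ n : ℕ, (Aop (doobPhi X))^[n] f z) = ⊤) ∧
    ((p / (p - 1)) ^ p ≤ c →
      ∀ z : {z : X × ℝ // ‖z.1‖ ≤ z.2},
        ∃ r : ℝ, (⨆ n : ℕ, (Aop (doobPhi X))^[n] f z) = (r : EReal)) := by
  constructor
  · intro hlt z hz
    obtain ⟨ε, l, hε, hl, hl1, hk, hcl⟩ := exists_param p hp c hlt
    obtain ⟨x₁, s, hx₁, hs0, hs1, hxs⟩ : ∃ (x₁ : X) (s : ℝ), ‖x₁‖ = z.1.2 ∧ 0 ≤ s ∧ s ≤ 1 ∧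
        z.1.1 = s • x₁ := by
      by_cases h0 : z.1.1 = 0
      · obtain ⟨x₁, hx₁⟩ := exists_norm_eq X hz.le
        exact ⟨x₁, 0, hx₁, le_rfl, zero_le_one, by simp [h0]⟩
      · have hn : 0 < ‖z.1.1‖ := norm_pos_iff.2 h0
        refine ⟨(z.1.2 / ‖z.1.1‖) • z.1.1, ‖z.1.1‖ / z.1.2, ?_, by positivity,
          (div_le_one hz).2 z.2, ?_⟩
        · rw [norm_smul, Real.norm_of_nonneg (by positivity)]; field_simp
        · rw [smul_smul]
          rw [show ‖z.1.1‖ / z.1.2 * (z.1.2 / ‖z.1.1‖) = 1 by field_simp, one_smul]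
    have hδ : 0 < ε / (ε + (1 - l)) * (1 - c * l ^ p) :=
      mul_pos (div_pos hε (by linarith)) (by linarith)
    have hyp : 0 < z.1.2 ^ p := Real.rpow_pos_of_pos hz p
    have key : ∀ n : ℕ, ((z.1.2 ^ p * (1 - c + n * (ε / (ε + (1 - l)) * (1 - c * l ^ p))) : ℝ)
        : EReal) ≤ ⨆ n : ℕ, (Aop (doobPhi X))^[n] f z := by
      intro n
      refine le_trans ?_ (le_iSup (fun n : ℕ => (Aop (doobPhi X))^[n] f z) (n + 1))
      simp only [Function.iterate_succ_apply']
      have e1 : doobPhi X z (x₁ - z.1.1) = ⟨(x₁, z.1.2), hx₁.le⟩ := by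
        apply Subtype.ext; simp [doobPhi, hx₁]
      have e2 : doobPhi X z (-x₁ - z.1.1) = ⟨(-x₁, z.1.2), by simp [hx₁]⟩ := by
        apply Subtype.ext; simp [doobPhi, hx₁]
      have i1 := diag_bound p c hc f hf ε l hε hl hl1 hk n (doobPhi X z (x₁ - z.1.1))
        (by rw [e1]; exact hx₁)
      have i2 := diag_bound p c hc f hf ε l hε hl hl1 hk n (doobPhi X z (-x₁ - z.1.1))
        (by rw [e2]; simpa using hx₁)
      have h := le_aop_two (doobPhi X) ((Aop (doobPhi X))^[n] f) z (x₁ - z.1.1) (-x₁ - z.1.1)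
        ((1 + s) / 2) ((1 - s) / 2) _ _ (by linarith) (by linarith) (by ring)
        (by rw [hxs]; module) i1 i2
      refine le_trans (le_of_eq ?_) h
      rw [e1, e2]
      congr 1
      ring
    rw [EReal.eq_top_iff_forall_lt]
    intro y
    obtain ⟨n, hn⟩ := exists_nat_gt
      ((y / z.1.2 ^ p - (1 - c)) / (ε / (ε + (1 - l)) * (1 - c * l ^ p)))
    refine lt_of_lt_of_le ?_ (key n)
    rw [EReal.coe_lt_coe_iff]
    rw [div_lt_iff₀ hδ] at hn
    have : y / z.1.2 ^ p < 1 - c + n * (ε / (ε + (1 - l)) * (1 - c * l ^ p)) := by linarith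
    rw [div_lt_iff₀ hyp] at this
    linarith
  · intro hle z
    set q := p / (p - 1) with hq
    have hq0 : 0 < q := div_pos (by linarith) (by linarith)
    have hqp : q * (p - 1) = p := by rw [hq]; field_simp [show p - 1 ≠ 0 by linarith]
    let U : {z : X × ℝ // ‖z.1‖ ≤ z.2} → EReal := fun z =>
      ((p * z.1.2 ^ p - p * q * z.1.2 ^ (p - 1) * ‖z.1.1‖ : ℝ) : EReal)
    have hpow : ∀ y : ℝ, 0 ≤ y → y ^ (p - 1) * y = y ^ p := by
      intro y hy
      rcases hy.eq_or_lt with rfl | hy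
      · rw [Real.zero_rpow (by linarith : p ≠ 0)]; simp
      · rw [← Real.rpow_add_one hy.ne']; congr 1; ring
    have hfU : ∀ z, f z ≤ U z := by
      intro z
      have hy : 0 ≤ z.1.2 := (norm_nonneg _).trans z.2
      rw [hf, EReal.coe_le_coe_iff]
      have t := tangent_rpow p hp (q * ‖z.1.1‖) z.1.2 (by positivity) hy
      rw [Real.mul_rpow hq0.le (norm_nonneg _)] at t
      have t2 := mul_le_mul_of_nonneg_right hle (Real.rpow_nonneg (norm_nonneg z.1.1) p)
      have t3 := hpow _ hy
      nlinarith
    have hAU : ∀ z, Aop (doobPhi X) U z ≤ U z := by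
      intro z
      have hy : 0 ≤ z.1.2 := (norm_nonneg _).trans z.2
      have hL : 0 ≤ p * q * z.1.2 ^ (p - 1) :=
        mul_nonneg (mul_nonneg (by linarith) hq0.le) (Real.rpow_nonneg hy _)
      let ψ : X → EReal := fun d =>
        ((p * z.1.2 ^ p - p * q * z.1.2 ^ (p - 1) * ‖z.1.1 + d‖ : ℝ) : EReal)
      have hψ : IsEConcave ψ := by
        intro x y a b ha hb hab
        simp only [ψ]
        rw [← EReal.coe_mul, ← EReal.coe_mul, ← EReal.coe_add, EReal.coe_le_coe_iff]
        have hn : ‖z.1.1 + (a • x + b • y)‖ ≤ a * ‖z.1.1 + x‖ + b * ‖z.1.1 + y‖ := by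
          have e : z.1.1 + (a • x + b • y) = a • (z.1.1 + x) + b • (z.1.1 + y) := by
            have : z.1.1 = (a + b) • z.1.1 := by rw [hab, one_smul]
            nth_rewrite 1 [this]
            module
          rw [e]
          refine (norm_add_le _ _).trans ?_
          rw [norm_smul, norm_smul, Real.norm_of_nonneg ha, Real.norm_of_nonneg hb]
        have := mul_le_mul_of_nonneg_left hn hL
        have hb' : b = 1 - a := by linarith
        subst hb'
        linarith
      have hdom : ∀ d, U (doobPhi X z d) ≤ ψ d := by
        intro d
        simp only [U, ψ, doobPhi]
        rw [EReal.coe_le_coe_iff]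
        rcases le_total ‖z.1.1 + d‖ z.1.2 with h | h
        · rw [max_eq_left h]
        · rw [max_eq_right h]
          have hr := norm_nonneg (z.1.1 + d)
          generalize ‖z.1.1 + d‖ = r at *
          have t := mul_le_mul_of_nonneg_left (tangent_rpow p hp r z.1.2 hr hy) hq0.le
          have e1 := hpow _ hy
          have e2 := hpow _ hr
          have e3 : p * q * r ^ (p - 1) * r = p * q * r ^ p := by rw [← e2]; ring
          have e4 : q * (p * z.1.2 ^ (p - 1) * (r - z.1.2)) =
            p * q * z.1.2 ^ (p - 1) * r - p * q * z.1.2 ^ p := by rw [← e1]; ring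
          have e5 : p * q = p + q := by linarith
          rw [mul_add, e4] at t
          rw [e3]
          have e6 : p * q * z.1.2 ^ p = (p + q) * z.1.2 ^ p := by rw [e5]
          have e7 : p * q * r ^ p = (p + q) * r ^ p := by rw [e5]
          linarith
      have := iInf_le (fun ψ : {ψ : X → EReal // IsEConcave ψ ∧ ∀ y, U (doobPhi X z y) ≤ ψ y} =>
        ψ.1 0) ⟨ψ, hψ, hdom⟩
      refine le_trans this (le_of_eq ?_)
      simp [ψ, U]
    have hit : ∀ n : ℕ, ∀ z, (Aop (doobPhi X))^[n] f z ≤ U z := by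
      intro n
      induction n with
      | zero => exact hfU
      | succ n ih =>
        intro z
        rw [Function.iterate_succ_apply']
        exact (aop_mono _ ih z).trans (hAU z)
    have hup : (⨆ n : ℕ, (Aop (doobPhi X))^[n] f z) ≤ U z := iSup_le fun n => hit n z
    have hlo : f z ≤ ⨆ n : ℕ, (Aop (doobPhi X))^[n] f z :=
      le_iSup (fun n : ℕ => (Aop (doobPhi X))^[n] f z) 0
    refine ⟨_, (EReal.coe_toReal ?_ ?_).symm⟩
    · exact ne_top_of_le_ne_top (EReal.coe_ne_top _) hup
    · rw [hf] at hlo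
      exact ne_bot_of_le_ne_bot (EReal.coe_ne_bot _) hlo
end
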